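/- Let m ≥ 2 be an integer and let q be a primitive Nth root of unity with N odd. Then Σ_{n_1,…,n_{2m−3}=0}^{N−1} (−1)^{n_{2m−3}} q^{n_{2m−3}(n_{2m−3}+1)/2 + n_1² + ⋯ + n_{2m−4}² + n_1 + ⋯ + n_{2m−4}} ∏_{i=1}^{2m−4} [n_{i+1} choose n_i]_q = 2·Σ_{n_1,…,n_{m−1}=0}^{N−1} (−1)^{n_{m−1}} q^{n_{m−1}(n_{m−1}+1) + 2n_1² + 2n_1 + ⋯ + 2n_{m−2}² + 2n_{m−2}} · (q;q²)_{n_1}/(−q;q)_{2n_1+1} · ∏_{i=1}^{m−2} [n_{i+1} choose n_i]_{q²}. -/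

import Mathlib

open Finset

/-- The q-Pochhammer symbol `(x;q)_n = ∏_{j=0}^{n-1} (1 - x q^j)`. -/
noncomputable def qPoch (x q : ℂ) (n : ℕ) : ℂ := ∏ j ∈ Finset.range n, (1 - x * q ^ j)

/-- The Gaussian binomial coefficient `[n choose k]_q`. -/
noncomputable def qBinom (q : ℂ) (n k : ℕ) : ℂ :=
  if k ≤ n then qPoch q q n / (qPoch q q (n - k) * qPoch q q k) else 0

/-- Extend a tuple `g : Fin k → ℕ` to `ℕ → ℕ` by zero. -/
def pad (k : ℕ) (g : Fin k → ℕ) : ℕ → ℕ := fun j => if h : j < k then g ⟨j, h⟩ else 0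

/-- The general term of the multi-sum `G_m(q)`: here `n j` denotes `n_{j+1}` (0-based indexing),
so `n (m-2)` is `n_{m-1}` and `n 0` is `n_1`. -/
noncomputable def Gterm (m : ℕ) (q : ℂ) (n : ℕ → ℕ) : ℂ :=
  (-1) ^ (n (m - 2)) *
    q ^ (n (m - 2) * (n (m - 2) + 1) +
        ∑ j ∈ Finset.range (m - 2), (2 * (n j) ^ 2 + 2 * n j)) *
    qPoch q (q ^ 2) (n 0) / qPoch (-q) q (2 * n 0 + 1) *
    ∏ i ∈ Finset.range (m - 2), qBinom (q ^ 2) (n (i + 1)) (n i)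

/-- The multi-sum `G_m(q)`. -/
noncomputable def G (m : ℕ) (q : ℂ) : ℂ := ∑' n : Fin (m - 1) → ℕ, Gterm m q (pad (m - 1) n)

/-- The truncated multi-sum `U_{m,N}(q)`. -/
noncomputable def U (m N : ℕ) (q : ℂ) : ℂ :=
  ∑ n ∈ Fintype.piFinset (fun _ : Fin (m - 1) => Finset.range N), Gterm m q (pad (m - 1) n)

/-- The odd periodic function `χ_{4(m-1)}`. -/
def chiG (m : ℕ) (k : ℤ) : ℤ :=
  if k % (4 * ((m : ℤ) - 1)) = (2 * (m : ℤ) - 3) % (4 * ((m : ℤ) - 1)) then 1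
  else if k % (4 * ((m : ℤ) - 1)) = (2 * (m : ℤ) - 1) % (4 * ((m : ℤ) - 1)) then -1
  else 0

/-- The general term of Hikami's multi-sum with `a = 0`: here `n j` denotes `n_{j+1}`
(0-based indexing). -/
noncomputable def Sterm (m a : ℕ) (q : ℂ) (n : ℕ → ℕ) : ℂ :=
  (-1) ^ (n (m - 2)) *
    q ^ (n (m - 2) * (n (m - 2) + 1) / 2 + (∑ j ∈ Finset.range (m - 2), (n j) ^ 2) +
        ∑ j ∈ Finset.Ico a (m - 2), n j) *
    ∏ i ∈ Finset.range (m - 2), qBinom q (n (i + 1) + if i + 1 = a then 1 else 0) (n i)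

/-!
Both multisums are sums over lattice paths: with the transfer matrix `T` of entries
`q ^ (k² + k) [n choose k]` they have the shape `w · T ^ l · v`. Conjugation by the diagonal matrix
`D` of the `(-q;q)_n` turns `T` into the square of `B = (q ^ (k (k + 1) / 2) [n choose k])`, and at
a root of unity of odd order `w = ε B D` with `ε = ((-1)ⁿ)`. Since moreover `B 1 = D 1`, the
left-hand side is `ε · B(q) ^ (4 l + 2) · 1` and the right-hand side is
`2 ε · B(q²) ^ (2 l + 1) · v'`. These agree because a lower triangular matrix `C` satisfies
`C B(q²) = B(q)² C`, `C v' = 1` and `ε C = 2 ε`.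
-/

theorem two_mul_choose_two_add (n : ℕ) : 2 * n.choose 2 + n = n ^ 2 := by
  induction n with
  | zero => rfl
  | succ n ih =>
    rw [Nat.choose_succ_succ', Nat.choose_one_right]
    linarith

theorem add_choose_two (m n : ℕ) : (m + n).choose 2 = m.choose 2 + n.choose 2 + m * n := by
  linarith [two_mul_choose_two_add m, two_mul_choose_two_add n, two_mul_choose_two_add (m + n)]

theorem two_mul_succ_choose_two (n : ℕ) : 2 * (n + 1).choose 2 = n ^ 2 + n := by
  linarith [two_mul_choose_two_add (n + 1)]

section Paths

open scoped Matrix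

/-- Peeling off the first vertex of a path turns the initial vector `v` into `A *ᵥ v`. -/
theorem sum_path_eq_dotProduct_pow_mulVec {ι R : Type*} [Fintype ι] [DecidableEq ι]
    [CommSemiring R] (A : Matrix ι ι R) (w : ι → R) (l : ℕ) (v : ι → R) :
    ∑ n : Fin (l + 1) → ι, w (n (Fin.last l)) * (∏ i : Fin l, A (n i.succ) (n i.castSucc)) * v (n 0)
      = w ⬝ᵥ (A ^ l *ᵥ v) := by
  induction l generalizing v with
  | zero =>
    rw [pow_zero, Matrix.one_mulVec, dotProduct, ← (Equiv.funUnique (Fin 1) ι).sum_comp]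
    simp
  | succ l ih =>
    rw [pow_succ, ← Matrix.mulVec_mulVec, ← ih, ← (Fin.consEquiv fun _ => ι).sum_comp,
      Fintype.sum_prod_type_right]
    refine sum_congr rfl fun n _ => ?_
    simp only [Fin.consEquiv_apply, ← Fin.succ_last, Fin.prod_univ_succ, Fin.cons_succ,
      Fin.castSucc_zero, Fin.cons_zero, ← Fin.succ_castSucc, Matrix.mulVec, dotProduct, mul_sum]
    exact sum_congr rfl fun k _ => by ring

theorem sum_piFinset_range {M : Type*} [AddCommMonoid M] (N l : ℕ) (f : (Fin l → ℕ) → M) :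
    ∑ n ∈ Fintype.piFinset (fun _ : Fin l => range N), f n
      = ∑ n : Fin l → Fin N, f (fun i => n i) := by
  symm
  refine sum_bij (fun n _ i => n i) (fun n _ => by simp) (fun n _ n' _ h => ?_) (fun n hn => ?_)
    (fun _ _ => rfl)
  · exact funext fun i => Fin.ext (congrFun h i)
  · exact ⟨fun i => ⟨n i, by simpa using Fintype.mem_piFinset.1 hn i⟩, mem_univ _, rfl⟩

theorem pad_val {l : ℕ} (n : Fin l → ℕ) (i : Fin l) : pad l n i = n i := by
  simp [pad]

theorem pad_lt {N l : ℕ} (hN : 0 < N) {n : Fin l → ℕ}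
    (hn : n ∈ Fintype.piFinset fun _ : Fin l => range N) (j : ℕ) : pad l n j < N := by
  unfold pad
  split_ifs with h
  · exact mem_range.1 (Fintype.mem_piFinset.1 hn ⟨j, h⟩)
  · exact hN

theorem sum_piFinset_range_pad_eq_dotProduct {R : Type*} [CommSemiring R] (N l : ℕ)
    (w : ℕ → R) (a : ℕ → ℕ → R) (v : ℕ → R) :
    ∑ n ∈ Fintype.piFinset (fun _ : Fin (l + 1) => range N),
        w (pad (l + 1) n l) * (∏ i ∈ range l, a (pad (l + 1) n (i + 1)) (pad (l + 1) n i))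
          * v (pad (l + 1) n 0)
      = (fun i : Fin N => w i) ⬝ᵥ
          (Matrix.of (fun i j : Fin N => a i j) ^ l *ᵥ fun i : Fin N => v i) := by
  rw [sum_piFinset_range, ← sum_path_eq_dotProduct_pow_mulVec]
  refine sum_congr rfl fun n _ => ?_
  have hlast := pad_val (fun i => (n i : ℕ)) (Fin.last l)
  have hzero := pad_val (fun i => (n i : ℕ)) 0
  have hsucc (i : Fin l) := pad_val (fun i => (n i : ℕ)) i.succ
  have hcast (i : Fin l) := pad_val (fun i => (n i : ℕ)) i.castSucc
  simp only [Fin.val_last, Fin.val_zero, Fin.val_succ, Fin.val_castSucc] at hlast hzero hsucc hcast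
  rw [← Fin.prod_univ_eq_prod_range fun i =>
    a (pad (l + 1) (fun i => (n i : ℕ)) (i + 1)) (pad (l + 1) (fun i => (n i : ℕ)) i)]
  simp only [hlast, hzero, hsucc, hcast, Matrix.of_apply]

end Paths

section GaussBinom

section CommSemiring

variable {R : Type*} [CommSemiring R] (q : R)

/-- The Gaussian binomial coefficient as a polynomial in `q`, defined by the Pascal recursion.
Unlike the quotient `qBinom`, it has no denominators that may vanish at a root of unity. -/
def gaussBinom (q : R) : ℕ → ℕ → R
  | _, 0 => 1
  | 0, _ + 1 => 0
  | n + 1, k + 1 => gaussBinom q n k + q ^ (k + 1) * gaussBinom q n (k + 1)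

@[simp]
theorem gaussBinom_zero_right (n : ℕ) : gaussBinom q n 0 = 1 := by
  cases n <;> rfl

theorem gaussBinom_succ_succ (n k : ℕ) :
    gaussBinom q (n + 1) (k + 1) = gaussBinom q n k + q ^ (k + 1) * gaussBinom q n (k + 1) :=
  rfl

theorem gaussBinom_eq_zero_of_lt {n k : ℕ} (h : n < k) : gaussBinom q n k = 0 := by
  induction n generalizing k with
  | zero =>
    obtain ⟨k, rfl⟩ := Nat.exists_eq_add_of_lt h
    simp [gaussBinom]
  | succ n ih =>
    obtain ⟨k, rfl⟩ := Nat.exists_eq_succ_of_ne_zero (Nat.ne_zero_of_lt h)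
    simp [gaussBinom_succ_succ, ih (k := k) (by omega), ih (k := k + 1) (by omega)]

@[simp]
theorem gaussBinom_self (n : ℕ) : gaussBinom q n n = 1 := by
  induction n with
  | zero => rfl
  | succ n ih => simp [gaussBinom_succ_succ, ih, gaussBinom_eq_zero_of_lt]

theorem gaussBinom_succ_succ' (s k : ℕ) :
    gaussBinom q (s + k + 1) (k + 1)
      = q ^ s * gaussBinom q (s + k) k + gaussBinom q (s + k) (k + 1) := by
  induction s generalizing k with
  | zero => simp [gaussBinom_eq_zero_of_lt]
  | succ s ihs =>
    induction k with
    | zero =>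
      have h : gaussBinom q (s + 1) 1 = q ^ s + gaussBinom q s 1 := by simpa using ihs 0
      calc gaussBinom q (s + 1 + 1) 1 = 1 + q * (q ^ s + gaussBinom q s 1) := by
            simp [gaussBinom_succ_succ q (s + 1), h]
        _ = q ^ (s + 1) * 1 + (1 + q * gaussBinom q s 1) := by ring
        _ = q ^ (s + 1) * gaussBinom q (s + 1) 0 + gaussBinom q (s + 1) 1 := by
            simp [gaussBinom_succ_succ]
    | succ k ihk =>
      have h := ihs (k + 1)
      rw [show s + (k + 1) = s + 1 + k by omega] at h
      rw [← add_assoc]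
      generalize s + 1 + k = n at *
      calc gaussBinom q (n + 1 + 1) (k + 1 + 1)
          = q ^ (s + 1) * gaussBinom q n k + gaussBinom q n (k + 1)
              + q ^ (k + 1 + 1)
                * (q ^ s * gaussBinom q n (k + 1) + gaussBinom q n (k + 1 + 1)) := by
            rw [gaussBinom_succ_succ, ihk, h]
        _ = q ^ (s + 1) * (gaussBinom q n k + q ^ (k + 1) * gaussBinom q n (k + 1))
              + (gaussBinom q n (k + 1) + q ^ (k + 1 + 1) * gaussBinom q n (k + 1 + 1)) := by ring
        _ = q ^ (s + 1) * gaussBinom q (n + 1) (k + 1) + gaussBinom q (n + 1) (k + 1 + 1) := by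
            rw [gaussBinom_succ_succ q n, gaussBinom_succ_succ q n]

theorem gaussBinom_symm_add (s k : ℕ) : gaussBinom q (s + k) k = gaussBinom q (s + k) s := by
  induction s generalizing k with
  | zero => simp
  | succ s ihs =>
    induction k with
    | zero => simp
    | succ k ihk =>
      have h := ihs (k + 1)
      have hpascal := gaussBinom_succ_succ' q (k + 1) s
      rw [show s + (k + 1) = s + 1 + k by omega] at h
      rw [show k + 1 + s = s + 1 + k by omega] at hpascal
      rw [← add_assoc, gaussBinom_succ_succ, ihk, h, hpascal, add_comm]

/-- Both sides count the flags `V_s ⊆ V_{k+s}` in an `(n+s)`-dimensional space over `𝔽_q`. -/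
theorem gaussBinom_mul (n k s : ℕ) :
    gaussBinom q (n + s) (k + s) * gaussBinom q (k + s) s
      = gaussBinom q (n + s) s * gaussBinom q n k := by
  induction s generalizing n k with
  | zero => simp
  | succ s ihs =>
    induction n generalizing k with
    | zero =>
      cases k with
      | zero => simp
      | succ k => simp [gaussBinom_eq_zero_of_lt]
    | succ n ihn =>
      cases k with
      | zero => simp
      | succ k =>
        have hs := ihs (n + 1) (k + 1)
        have hk := ihn k
        have hn := ihn (k + 1)
        rw [show n + 1 + s = n + (s + 1) by omega, show k + 1 + s = k + (s + 1) by omega] at hs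
        rw [show k + 1 + (s + 1) = k + (s + 1) + 1 by omega] at hn ⊢
        rw [show n + 1 + (s + 1) = n + (s + 1) + 1 by omega]
        generalize n + (s + 1) = a at *
        calc gaussBinom q (a + 1) (k + (s + 1) + 1) * gaussBinom q (k + (s + 1) + 1) (s + 1)
            = gaussBinom q a (k + (s + 1)) * gaussBinom q (k + (s + 1) + 1) (s + 1)
              + q ^ (k + (s + 1) + 1) * (gaussBinom q a (s + 1) * gaussBinom q n (k + 1)) := by
              rw [gaussBinom_succ_succ q a, add_mul, mul_assoc, hn]
          _ = gaussBinom q a (k + (s + 1)) * gaussBinom q (k + (s + 1)) s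
              + q ^ (s + 1) * (gaussBinom q a (k + (s + 1)) * gaussBinom q (k + (s + 1)) (s + 1))
              + q ^ (k + (s + 1) + 1) * (gaussBinom q a (s + 1) * gaussBinom q n (k + 1)) := by
              rw [gaussBinom_succ_succ q (k + (s + 1))]
              ring
          _ = gaussBinom q a s * gaussBinom q (n + 1) (k + 1) + q ^ (s + 1) * gaussBinom q a (s + 1)
              * (gaussBinom q n k + q ^ (k + 1) * gaussBinom q n (k + 1)) := by
              rw [hs, hk]
              ring
          _ = gaussBinom q (a + 1) (s + 1) * gaussBinom q (n + 1) (k + 1) := by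
              rw [← gaussBinom_succ_succ, gaussBinom_succ_succ q a s, add_mul]

theorem sum_range_mul_gaussBinom_of_lt {N n : ℕ} (hn : n < N) (f : ℕ → R) :
    ∑ k ∈ range N, f k * gaussBinom q n k = ∑ k ∈ range (n + 1), f k * gaussBinom q n k := by
  refine (sum_subset (by simpa using hn) fun k _ hk => ?_).symm
  rw [gaussBinom_eq_zero_of_lt q (by simpa using hk), mul_zero]

theorem sum_mul_gaussBinom_mul_gaussBinom {N n : ℕ} (hn : n < N) (k : ℕ) (f : ℕ → R) :
    ∑ j ∈ range N, f j * (gaussBinom q n j * gaussBinom q j k)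
      = gaussBinom q n k * ∑ i ∈ range (n - k + 1), f (k + i) * gaussBinom q (n - k) i := by
  obtain hnk | hkn := lt_or_ge n k
  · rw [gaussBinom_eq_zero_of_lt q hnk, zero_mul]
    refine sum_eq_zero fun j _ => ?_
    obtain hj | hj := lt_or_ge n j
    · simp [gaussBinom_eq_zero_of_lt q hj]
    · simp [gaussBinom_eq_zero_of_lt q (hj.trans_lt hnk)]
  obtain ⟨p, rfl⟩ := Nat.exists_eq_add_of_le' hkn
  have hbelow : ∑ j ∈ range k, f j * gaussBinom q j k * gaussBinom q (p + k) j = 0 :=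
    sum_eq_zero fun j hj => by simp [gaussBinom_eq_zero_of_lt q (mem_range.1 hj)]
  calc ∑ j ∈ range N, f j * (gaussBinom q (p + k) j * gaussBinom q j k)
      = ∑ j ∈ range N, f j * gaussBinom q j k * gaussBinom q (p + k) j :=
        sum_congr rfl fun j _ => by ring
    _ = ∑ j ∈ range (k + (p + 1)), f j * gaussBinom q j k * gaussBinom q (p + k) j := by
        rw [sum_range_mul_gaussBinom_of_lt q hn, show p + k + 1 = k + (p + 1) by omega]
    _ = ∑ i ∈ range (p + 1),
          f (k + i) * (gaussBinom q (p + k) (i + k) * gaussBinom q (i + k) k) := by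
        rw [sum_range_add, hbelow, zero_add]
        refine sum_congr rfl fun i _ => ?_
        rw [add_comm k i]
        ring
    _ = gaussBinom q (p + k) k * ∑ i ∈ range (p + k - k + 1),
          f (k + i) * gaussBinom q (p + k - k) i := by
        rw [Nat.add_sub_cancel, mul_sum]
        refine sum_congr rfl fun i _ => ?_
        rw [gaussBinom_mul]
        ring

theorem sum_range_succ_mul_gaussBinom_succ (a : ℕ → R) (n : ℕ) :
    ∑ i ∈ range (n + 2), a i * gaussBinom q (n + 1) i
      = ∑ i ∈ range (n + 1), (a (i + 1) + a i * q ^ i) * gaussBinom q n i := by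
  have hshift : ∑ i ∈ range (n + 1), a i * q ^ i * gaussBinom q n i
      = ∑ i ∈ range (n + 1), a (i + 1) * q ^ (i + 1) * gaussBinom q n (i + 1) + a 0 := by
    have := sum_range_succ' (fun i => a i * q ^ i * gaussBinom q n i) (n + 1)
    rw [sum_range_mul_gaussBinom_of_lt q (by omega : n < n + 1 + 1)] at this
    simpa using this
  rw [sum_range_succ', gaussBinom_zero_right, mul_one]
  simp only [add_mul, sum_add_distrib, hshift, ← add_assoc]
  simp only [← sum_add_distrib, gaussBinom_succ_succ, mul_add, mul_assoc]

theorem sum_pow_choose_two_mul_gaussBinom (n : ℕ) (x : R) :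
    ∑ i ∈ range (n + 1), q ^ i.choose 2 * x ^ i * gaussBinom q n i
      = ∏ j ∈ range n, (1 + x * q ^ j) := by
  induction n generalizing x with
  | zero => simp
  | succ n ih =>
    have hshift : ∏ j ∈ range n, (1 + x * q ^ (j + 1)) = ∏ j ∈ range n, (1 + x * q * q ^ j) :=
      prod_congr rfl fun j _ => by ring
    rw [sum_range_succ_mul_gaussBinom_succ, prod_range_succ', hshift, ← ih, sum_mul]
    refine sum_congr rfl fun i _ => ?_
    rw [Nat.choose_succ_succ', Nat.choose_one_right]
    ring

theorem sum_pow_sub_mul_gaussBinom_sq (n : ℕ) :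
    ∑ i ∈ range (n + 1), q ^ (n - i) * gaussBinom (q ^ 2) n i
      = ∏ j ∈ range n, (1 + q ^ (j + 1)) := by
  induction n with
  | zero => simp
  | succ n ih =>
    have hreflect : ∑ i ∈ range (n + 1), q ^ i * gaussBinom (q ^ 2) n i
        = ∑ i ∈ range (n + 1), q ^ (n - i) * gaussBinom (q ^ 2) n i := by
      rw [← sum_range_reflect]
      refine sum_congr rfl fun i hi => ?_
      obtain ⟨s, rfl⟩ := Nat.exists_eq_add_of_le (mem_range_succ_iff.1 hi)
      rw [show i + s + 1 - 1 - i = s by omega, show i + s - i = s by omega, gaussBinom_symm_add]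
    rw [sum_range_succ_mul_gaussBinom_succ, prod_range_succ, ← ih]
    calc ∑ i ∈ range (n + 1),
          (q ^ (n + 1 - (i + 1)) + q ^ (n + 1 - i) * (q ^ 2) ^ i) * gaussBinom (q ^ 2) n i
        = ∑ i ∈ range (n + 1), (q ^ (n - i) * gaussBinom (q ^ 2) n i
            + q ^ (n + 1) * (q ^ i * gaussBinom (q ^ 2) n i)) := by
          refine sum_congr rfl fun i hi => ?_
          obtain ⟨s, rfl⟩ := Nat.exists_eq_add_of_le (mem_range_succ_iff.1 hi)
          rw [show i + s + 1 - (i + 1) = s by omega, show i + s + 1 - i = s + 1 by omega,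
            show i + s - i = s by omega]
          ring
      _ = (∑ i ∈ range (n + 1), q ^ (n - i) * gaussBinom (q ^ 2) n i) * (1 + q ^ (n + 1)) := by
          rw [sum_add_distrib, ← mul_sum, hreflect]
          ring

end CommSemiring

section CommRing

variable {R : Type*} [CommRing R] (q : R)

theorem one_sub_pow_mul_gaussBinom (s k : ℕ) :
    (1 - q ^ s) * gaussBinom q (s + k) k = (1 - q ^ (k + 1)) * gaussBinom q (s + k) (k + 1) := by
  linear_combination gaussBinom_succ_succ' q s k - gaussBinom_succ_succ q (s + k) k

theorem one_sub_pow_succ_mul_gaussBinom_succ (n k : ℕ) :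
    (1 - q ^ (k + 1)) * gaussBinom q (n + 1) (k + 1) = (1 - q ^ (n + 1)) * gaussBinom q n k := by
  obtain hnk | hkn := lt_or_ge n k
  · simp [gaussBinom_eq_zero_of_lt, hnk]
  · obtain ⟨s, rfl⟩ := Nat.exists_eq_add_of_le' hkn
    linear_combination (1 - q ^ (k + 1)) * gaussBinom_succ_succ q (s + k) k
      - q ^ (k + 1) * one_sub_pow_mul_gaussBinom q s k

end CommRing

end GaussBinom

section QPoch

@[simp]
theorem qPoch_zero (x q : ℂ) : qPoch x q 0 = 1 :=
  prod_range_zero _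

theorem qPoch_succ (x q : ℂ) (n : ℕ) : qPoch x q (n + 1) = qPoch x q n * (1 - x * q ^ n) :=
  prod_range_succ _ n

theorem qPoch_add (x q : ℂ) (m n : ℕ) :
    qPoch x q (m + n) = qPoch x q m * qPoch (x * q ^ m) q n := by
  simp only [qPoch, prod_range_add, pow_add, mul_assoc]

theorem qPoch_succ' (x q : ℂ) (n : ℕ) : qPoch x q (n + 1) = (1 - x) * qPoch (x * q) q n := by
  rw [add_comm, qPoch_add]
  simp [qPoch]

theorem qPoch_neg (x q : ℂ) (n : ℕ) : qPoch (-x) q n = ∏ j ∈ range n, (1 + x * q ^ j) := by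
  simp only [qPoch, neg_mul, sub_neg_eq_add]

theorem qPoch_neg_odd (q : ℂ) (n : ℕ) :
    qPoch (-q) q (2 * n + 1) = qPoch (-q) (q ^ 2) (n + 1) * qPoch (-q ^ 2) (q ^ 2) n := by
  induction n with
  | zero => simp [qPoch]
  | succ n ih =>
    rw [show 2 * (n + 1) + 1 = 2 * n + 1 + 1 + 1 by omega, qPoch_succ, qPoch_succ, ih,
      qPoch_succ _ _ (n + 1), qPoch_succ (-q ^ 2) (q ^ 2) n]
    ring

theorem gaussBinom_mul_qPoch (q : ℂ) (s k : ℕ) :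
    gaussBinom q (s + k) k * (qPoch q q s * qPoch q q k) = qPoch q q (s + k) := by
  induction k with
  | zero => simp
  | succ k ih =>
    rw [← add_assoc, qPoch_succ, qPoch_succ]
    linear_combination (1 - q * q ^ (s + k)) * ih
      + qPoch q q s * qPoch q q k * one_sub_pow_succ_mul_gaussBinom_succ q (s + k) k

theorem sum_qPoch_mul_gaussBinom (q x : ℂ) (n : ℕ) :
    ∑ k ∈ range (n + 1), x ^ (n - k) * qPoch x q k * gaussBinom q n k = 1 := by
  induction n with
  | zero => simp
  | succ n ih =>
    rw [sum_range_succ_mul_gaussBinom_succ, ← ih]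
    refine sum_congr rfl fun i hi => ?_
    obtain ⟨s, rfl⟩ := Nat.exists_eq_add_of_le (mem_range_succ_iff.1 hi)
    rw [show i + s + 1 - i = s + 1 by omega, show i + s + 1 - (i + 1) = s by omega,
      show i + s - i = s by omega, qPoch_succ]
    ring

theorem sum_pow_sub_mul_gaussBinom_sq_eq_qPoch (q : ℂ) (n : ℕ) :
    ∑ i ∈ range (n + 1), q ^ (n - i) * gaussBinom (q ^ 2) n i = qPoch (-q) q n := by
  rw [sum_pow_sub_mul_gaussBinom_sq, qPoch_neg]
  exact prod_congr rfl fun j _ => by ring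

theorem sum_pow_choose_two_mul_gaussBinom_eq_qPoch (q : ℂ) (n k : ℕ) :
    ∑ i ∈ range (n + 1), q ^ (i.choose 2) * (q ^ k) ^ i * gaussBinom q n i
      = qPoch (-q ^ k) q n := by
  rw [sum_pow_choose_two_mul_gaussBinom, qPoch_neg]

/-- Multiplied by `(-q;q)_k`, this is the splitting `(q²;q²)_n = (q;q)_n (-q;q)_n` applied to
the three factors of `[s+k choose k]`. -/
theorem gaussBinom_mul_qPoch_neg (q : ℂ) (s k : ℕ) :
    gaussBinom q (s + k) k * qPoch (-q ^ (k + 1)) q s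
      = gaussBinom (q ^ 2) (s + k) k * qPoch (-q) q s := by
  induction k generalizing s with
  | zero => simp
  | succ k ihk =>
    induction s with
    | zero => simp
    | succ s ihs =>
      have hk := ihk (s + 1)
      have hcol := one_sub_pow_mul_gaussBinom q (s + 1) k
      rw [show s + (k + 1) = s + 1 + k by omega, show k + 1 + 1 = k + 2 from rfl] at ihs
      rw [qPoch_succ', show -q ^ (k + 1) * q = -q ^ (k + 2) by ring, qPoch_succ] at hk
      rw [← add_assoc, gaussBinom_succ_succ, gaussBinom_succ_succ, qPoch_succ, qPoch_succ]
      linear_combination hk + q ^ (2 * k + 2) * (1 + q ^ (s + 1)) * ihs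
        - q ^ (k + 1) * qPoch (-q ^ (k + 2)) q s * hcol

theorem sum_pow_sub_mul_qPoch_mul_gaussBinom (q x : ℂ) (p : ℕ) :
    ∑ i ∈ range (p + 1), q ^ (p - i) * qPoch (-(x * q)) (q ^ 2) i * gaussBinom (q ^ 2) p i
      = ∑ r ∈ range (p + 1),
          q ^ r ^ 2 * x ^ r * qPoch (-q) q (p - r) * gaussBinom (q ^ 2) p r := by
  have hexpand : ∀ i ∈ range (p + 1), qPoch (-(x * q)) (q ^ 2) i
      = ∑ r ∈ range (p + 1), q ^ r ^ 2 * x ^ r * gaussBinom (q ^ 2) i r := by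
    intro i hi
    rw [sum_range_mul_gaussBinom_of_lt _ (mem_range.1 hi), qPoch_neg,
      ← sum_pow_choose_two_mul_gaussBinom]
    refine sum_congr rfl fun r _ => ?_
    rw [mul_pow, ← two_mul_choose_two_add r, pow_add, pow_mul]
    ring
  have hinner : ∀ r ∈ range (p + 1),
      ∑ i ∈ range (p + 1), q ^ (p - i) * (gaussBinom (q ^ 2) p i * gaussBinom (q ^ 2) i r)
        = gaussBinom (q ^ 2) p r * qPoch (-q) q (p - r) := by
    intro r _
    rw [sum_mul_gaussBinom_mul_gaussBinom _ p.lt_succ_self,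
      ← sum_pow_sub_mul_gaussBinom_sq_eq_qPoch]
    simp only [Nat.sub_sub]
  calc ∑ i ∈ range (p + 1), q ^ (p - i) * qPoch (-(x * q)) (q ^ 2) i * gaussBinom (q ^ 2) p i
      = ∑ i ∈ range (p + 1), ∑ r ∈ range (p + 1), q ^ r ^ 2 * x ^ r
          * (q ^ (p - i) * (gaussBinom (q ^ 2) p i * gaussBinom (q ^ 2) i r)) := by
        refine sum_congr rfl fun i hi => ?_
        rw [hexpand i hi, mul_sum, sum_mul]
        exact sum_congr rfl fun r _ => by ring
    _ = ∑ r ∈ range (p + 1),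
          q ^ r ^ 2 * x ^ r * qPoch (-q) q (p - r) * gaussBinom (q ^ 2) p r := by
        rw [sum_comm]
        refine sum_congr rfl fun r hr => ?_
        rw [← mul_sum, hinner r hr]
        ring

end QPoch

section RootOfUnity

theorem isPrimitiveRoot_sq {M : Type*} [CommMonoid M] {q : M} {N : ℕ} (hq : IsPrimitiveRoot q N)
    (hN : Odd N) : IsPrimitiveRoot (q ^ 2) N :=
  hq.pow_of_coprime 2 (Nat.coprime_two_left.2 hN)

theorem gaussBinom_eq_zero_of_isPrimitiveRoot {R : Type*} [CommRing R] [IsDomain R] {q : R}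
    {N k : ℕ} (hq : IsPrimitiveRoot q N) (hk : k + 1 < N) : gaussBinom q N (k + 1) = 0 := by
  obtain ⟨n, rfl⟩ := Nat.exists_eq_succ_of_ne_zero (Nat.ne_zero_of_lt hk)
  have h := one_sub_pow_succ_mul_gaussBinom_succ q n k
  rw [hq.pow_eq_one, sub_self, zero_mul] at h
  have hne := hq.pow_ne_one_of_pos_of_lt k.succ_ne_zero hk
  exact (mul_eq_zero.1 h).resolve_left (sub_ne_zero.2 hne.symm)

variable {q : ℂ} {N : ℕ}

theorem qPoch_self_ne_zero (hq : IsPrimitiveRoot q N) {n : ℕ} (hn : n < N) :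
    qPoch q q n ≠ 0 := by
  refine prod_ne_zero_iff.2 fun j hj h => ?_
  have hjN : j + 1 < N := by linarith [mem_range.1 hj]
  exact hq.pow_ne_one_of_pos_of_lt j.add_one_ne_zero hjN (by linear_combination -h)

theorem qPoch_neg_self_ne_zero (hq : q ^ N = 1) (hN : Odd N) (n : ℕ) : qPoch (-q) q n ≠ 0 := by
  refine prod_ne_zero_iff.2 fun j _ h => ?_
  have hneg : q ^ (j + 1) = -1 := by linear_combination h
  have hone : (-1 : ℂ) ^ N = 1 := by rw [← hneg, pow_right_comm, hq, one_pow]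
  rw [hN.neg_one_pow] at hone
  norm_num at hone

theorem qBinom_eq_gaussBinom (hq : IsPrimitiveRoot q N) {n : ℕ} (hn : n < N) (k : ℕ) :
    qBinom q n k = gaussBinom q n k := by
  unfold qBinom
  split_ifs with hkn
  · obtain ⟨s, rfl⟩ := Nat.exists_eq_add_of_le' hkn
    have hs : qPoch q q s ≠ 0 := qPoch_self_ne_zero hq (by omega)
    have hk : qPoch q q k ≠ 0 := qPoch_self_ne_zero hq (by omega)
    rw [Nat.add_sub_cancel, div_eq_iff (mul_ne_zero hs hk), gaussBinom_mul_qPoch]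
  · rw [gaussBinom_eq_zero_of_lt q (not_le.1 hkn)]

/-- The generating function `∑ zⁿ [n choose k] = z^k / (z;q)_{k+1}`, truncated at the order of
`q`. -/
theorem sum_pow_mul_gaussBinom_mul_qPoch (hq : IsPrimitiveRoot q N) (z : ℂ) {k : ℕ}
    (hk : k < N) :
    (∑ n ∈ range N, z ^ n * gaussBinom q n k) * qPoch z q (k + 1) = z ^ k * (1 - z ^ N) := by
  induction k with
  | zero => simpa [qPoch] using geom_sum_mul_neg z N
  | succ k ih =>
    have hshift : ∑ n ∈ range N, z ^ (n + 1) * gaussBinom q (n + 1) (k + 1)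
        = ∑ n ∈ range N, z ^ n * gaussBinom q n (k + 1) := by
      have h := sum_range_succ' (fun n => z ^ n * gaussBinom q n (k + 1)) N
      rw [sum_range_succ, gaussBinom_eq_zero_of_isPrimitiveRoot hq hk,
        gaussBinom_eq_zero_of_lt q k.succ_pos] at h
      simpa using h.symm
    have hpascal : ∑ n ∈ range N, z ^ (n + 1) * gaussBinom q (n + 1) (k + 1)
        = z * ∑ n ∈ range N, z ^ n * gaussBinom q n k
          + z * q ^ (k + 1) * ∑ n ∈ range N, z ^ n * gaussBinom q n (k + 1) := by
      rw [mul_sum, mul_sum, ← sum_add_distrib]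
      refine sum_congr rfl fun n _ => ?_
      rw [gaussBinom_succ_succ]
      ring
    rw [qPoch_succ]
    linear_combination z * ih (by omega) + qPoch z q (k + 1) * (hpascal - hshift)

theorem sum_neg_one_pow_mul_gaussBinom (hq : IsPrimitiveRoot q N) (hN : Odd N) {k : ℕ}
    (hk : k < N) :
    (∑ n ∈ range N, (-1) ^ n * gaussBinom q n k) * qPoch (-q) q k = (-1) ^ k := by
  have h := sum_pow_mul_gaussBinom_mul_qPoch hq (-1) hk
  rw [qPoch_succ', neg_one_mul, hN.neg_one_pow] at h
  linear_combination h / 2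

end RootOfUnity

section TransferMatrices

open scoped Matrix

/-- The transfer matrix from one summation variable to the next: that of `Sterm` in base `q`, and
that of `Gterm` in base `q ^ 2`. -/
def fullStep (N : ℕ) (q : ℂ) : Matrix (Fin N) (Fin N) ℂ :=
  .of fun n k => gaussBinom q n k * q ^ (k ^ 2 + k : ℕ)

/-- The Gaussian transfer matrix `q ^ (k (k + 1) / 2) [n choose k]`, whose square is conjugate to
`fullStep`. -/
def halfStep (N : ℕ) (q : ℂ) : Matrix (Fin N) (Fin N) ℂ :=
  .of fun n k => q ^ (k + 1 : ℕ).choose 2 * gaussBinom q n k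

/-- The diagonal matrix of the `(-q;q)_n`, which conjugates `fullStep` to `halfStep ^ 2`. -/
noncomputable def negPochDiag (N : ℕ) (q : ℂ) : Matrix (Fin N) (Fin N) ℂ :=
  .diagonal fun n => qPoch (-q) q n

/-- The matrix intertwining one half step in base `q ^ 2` with two half steps in base `q`. -/
noncomputable def baseChange (N : ℕ) (q : ℂ) : Matrix (Fin N) (Fin N) ℂ :=
  .of fun n k => q ^ (n - k : ℕ) * gaussBinom (q ^ 2) n k * qPoch (-q) (q ^ 2) (k + 1)

/-- The row vector of signs `(-1)ⁿ`. At a root of unity of odd order it is a left eigenvector of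
`baseChange`, and half steps turn it into `lastWeight`. -/
def signVec (N : ℕ) : Fin N → ℂ := fun n => (-1) ^ (n : ℕ)

/-- The weight `(-1)ⁿ q ^ (n (n + 1) / 2)` of the last summation variable: that of `Sterm` in base
`q`, and that of `Gterm` in base `q ^ 2`. -/
def lastWeight (N : ℕ) (q : ℂ) : Fin N → ℂ := fun n => (-1) ^ (n : ℕ) * q ^ (n + 1 : ℕ).choose 2

/-- The weight `(q;q²)_n / (-q;q)_{2n+1}` of the first summation variable in `Gterm`. -/
noncomputable def firstWeight (N : ℕ) (q : ℂ) : Fin N → ℂ :=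
  fun n => qPoch q (q ^ 2) n / qPoch (-q) q (2 * n + 1)

variable (N : ℕ) (q : ℂ)

theorem halfStep_sq_apply (n k : Fin N) :
    (halfStep N q ^ 2) n k
      = q ^ (k ^ 2 + k : ℕ) * gaussBinom (q ^ 2) n k * qPoch (-q) q (n - k) := by
  have hsum : (halfStep N q ^ 2) n k = q ^ (k + 1 : ℕ).choose 2
      * ∑ j ∈ range N, q ^ (j + 1).choose 2 * (gaussBinom q n j * gaussBinom q j k) := by
    rw [sq, Matrix.mul_apply, mul_sum, ← Fin.sum_univ_eq_sum_range fun j =>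
      q ^ (k + 1 : ℕ).choose 2 * (q ^ (j + 1).choose 2 * (gaussBinom q n j * gaussBinom q j k))]
    refine sum_congr rfl fun j _ => ?_
    simp only [halfStep, Matrix.of_apply]
    ring
  have hinner : ∑ i ∈ range (n - k + 1 : ℕ), q ^ (k + i + 1 : ℕ).choose 2 * gaussBinom q (n - k) i
      = q ^ (k + 1 : ℕ).choose 2 * qPoch (-q ^ (k + 1 : ℕ)) q (n - k) := by
    rw [← sum_pow_choose_two_mul_gaussBinom_eq_qPoch, mul_sum]
    refine sum_congr rfl fun i _ => ?_
    rw [add_right_comm, add_choose_two]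
    ring
  rw [hsum, sum_mul_gaussBinom_mul_gaussBinom q n.2, hinner, ← two_mul_succ_choose_two]
  obtain hnk | hkn := lt_or_ge (n : ℕ) k
  · simp [gaussBinom_eq_zero_of_lt, hnk]
  · obtain ⟨s, hs⟩ := Nat.exists_eq_add_of_le' hkn
    rw [hs, Nat.add_sub_cancel]
    linear_combination q ^ (2 * (k + 1 : ℕ).choose 2) * gaussBinom_mul_qPoch_neg q s k

theorem semiconjBy_negPochDiag :
    SemiconjBy (negPochDiag N q) (fullStep N q) (halfStep N q ^ 2) := by
  ext n k
  rw [negPochDiag, Matrix.diagonal_mul, Matrix.mul_diagonal, halfStep_sq_apply, fullStep,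
    Matrix.of_apply]
  obtain hnk | hkn := lt_or_ge (n : ℕ) k
  · simp [gaussBinom_eq_zero_of_lt, hnk]
  · obtain ⟨s, hs⟩ := Nat.exists_eq_add_of_le' hkn
    have hsplit : qPoch (-q) q (s + k) = qPoch (-q) q k * qPoch (-q ^ (k + 1 : ℕ)) q s := by
      rw [add_comm, qPoch_add, pow_succ', neg_mul]
    rw [hs, Nat.add_sub_cancel, hsplit]
    linear_combination q ^ (k ^ 2 + k : ℕ) * qPoch (-q) q k * gaussBinom_mul_qPoch_neg q s k

theorem baseChange_mul_halfStep_apply (n k : Fin N) :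
    (baseChange N q * halfStep N (q ^ 2)) n k
      = q ^ (k ^ 2 + k : ℕ) * qPoch (-q) (q ^ 2) (k + 1) * gaussBinom (q ^ 2) n k
        * ∑ i ∈ range (n - k + 1 : ℕ), q ^ (n - k - i : ℕ)
          * qPoch (-((q ^ 2) ^ (k + 1 : ℕ) * q)) (q ^ 2) i * gaussBinom (q ^ 2) (n - k) i := by
  let f (j : ℕ) : ℂ := q ^ (k ^ 2 + k : ℕ) * (q ^ (n - j) * qPoch (-q) (q ^ 2) (j + 1))
  have hsum : (baseChange N q * halfStep N (q ^ 2)) n k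
      = ∑ j ∈ range N, f j * (gaussBinom (q ^ 2) n j * gaussBinom (q ^ 2) j k) := by
    rw [Matrix.mul_apply, ← Fin.sum_univ_eq_sum_range fun j =>
      f j * (gaussBinom (q ^ 2) n j * gaussBinom (q ^ 2) j k)]
    refine sum_congr rfl fun j _ => ?_
    simp only [baseChange, halfStep, Matrix.of_apply, f, ← pow_mul, two_mul_succ_choose_two]
    ring
  rw [hsum, sum_mul_gaussBinom_mul_gaussBinom (q ^ 2) n.2, mul_sum, mul_sum]
  refine sum_congr rfl fun i _ => ?_
  simp only [f]
  rw [add_right_comm, qPoch_add, Nat.sub_sub,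
    show -q * (q ^ 2) ^ (k + 1 : ℕ) = -((q ^ 2) ^ (k + 1 : ℕ) * q) by ring]
  ring

theorem halfStep_sq_mul_baseChange_apply (n k : Fin N) :
    (halfStep N q ^ 2 * baseChange N q) n k
      = q ^ (k ^ 2 + k : ℕ) * qPoch (-q) (q ^ 2) (k + 1) * gaussBinom (q ^ 2) n k
        * ∑ i ∈ range (n - k + 1 : ℕ), q ^ i ^ 2 * ((q ^ 2) ^ (k + 1 : ℕ)) ^ i
          * qPoch (-q) q (n - k - i) * gaussBinom (q ^ 2) (n - k) i := by
  let f (j : ℕ) : ℂ :=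
    q ^ (j ^ 2 + j) * qPoch (-q) q (n - j) * (q ^ (j - k) * qPoch (-q) (q ^ 2) (k + 1))
  have hsum : (halfStep N q ^ 2 * baseChange N q) n k
      = ∑ j ∈ range N, f j * (gaussBinom (q ^ 2) n j * gaussBinom (q ^ 2) j k) := by
    rw [Matrix.mul_apply, ← Fin.sum_univ_eq_sum_range fun j =>
      f j * (gaussBinom (q ^ 2) n j * gaussBinom (q ^ 2) j k)]
    refine sum_congr rfl fun j _ => ?_
    simp only [halfStep_sq_apply, baseChange, Matrix.of_apply, f]
    ring
  rw [hsum, sum_mul_gaussBinom_mul_gaussBinom (q ^ 2) n.2, mul_sum, mul_sum]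
  refine sum_congr rfl fun i _ => ?_
  simp only [f]
  rw [Nat.add_sub_cancel_left, Nat.sub_sub]
  ring

theorem semiconjBy_baseChange :
    SemiconjBy (baseChange N q) (halfStep N (q ^ 2)) (halfStep N q ^ 2) := by
  ext n k
  rw [baseChange_mul_halfStep_apply, halfStep_sq_mul_baseChange_apply,
    sum_pow_sub_mul_qPoch_mul_gaussBinom]

theorem halfStep_mulVec_one : halfStep N q *ᵥ 1 = negPochDiag N q *ᵥ 1 := by
  ext n
  have h := sum_pow_choose_two_mul_gaussBinom_eq_qPoch q n 1
  rw [← sum_range_mul_gaussBinom_of_lt q n.2, pow_one] at h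
  rw [negPochDiag, Matrix.mulVec_diagonal, Pi.one_apply, mul_one, ← h,
    ← Fin.sum_univ_eq_sum_range fun i => q ^ i.choose 2 * q ^ i * gaussBinom q n i,
    Matrix.mulVec, dotProduct]
  refine sum_congr rfl fun k _ => ?_
  rw [halfStep, Matrix.of_apply, Nat.choose_succ_succ', Nat.choose_one_right, Pi.one_apply]
  ring

variable {N q}

theorem baseChange_mulVec_firstWeight (hq : q ^ N = 1) (hN : Odd N) :
    baseChange N q *ᵥ (negPochDiag N (q ^ 2) *ᵥ firstWeight N q) = 1 := by
  ext n
  have h := sum_qPoch_mul_gaussBinom (q ^ 2) q n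
  rw [← sum_range_mul_gaussBinom_of_lt _ n.2, ← Fin.sum_univ_eq_sum_range fun k =>
    q ^ (n - k) * qPoch q (q ^ 2) k * gaussBinom (q ^ 2) n k] at h
  rw [Pi.one_apply, ← h, Matrix.mulVec, dotProduct]
  refine sum_congr rfl fun k _ => ?_
  have hne := qPoch_neg_self_ne_zero hq hN (2 * k + 1)
  rw [negPochDiag, Matrix.mulVec_diagonal, firstWeight, baseChange, Matrix.of_apply,
    mul_div_assoc', mul_div_assoc', div_eq_iff hne, qPoch_neg_odd]
  ring

theorem signVec_vecMul_halfStep (hq : IsPrimitiveRoot q N) (hN : Odd N) :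
    signVec N ᵥ* (halfStep N q * negPochDiag N q) = lastWeight N q := by
  ext k
  rw [negPochDiag, ← Matrix.vecMul_vecMul, Matrix.vecMul_diagonal, lastWeight,
    ← sum_neg_one_pow_mul_gaussBinom hq hN k.2,
    ← Fin.sum_univ_eq_sum_range fun n => (-1) ^ n * gaussBinom q n k, mul_right_comm, sum_mul,
    Matrix.vecMul, dotProduct]
  congr 1
  refine sum_congr rfl fun n _ => ?_
  rw [signVec, halfStep, Matrix.of_apply]
  ring

theorem signVec_vecMul_baseChange (hq : IsPrimitiveRoot q N) (hN : Odd N) :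
    signVec N ᵥ* baseChange N q = (2 : ℂ) • signVec N := by
  ext k
  have hq0 : q ^ (k : ℕ) ≠ 0 := pow_ne_zero _ (hq.ne_zero hN.pos.ne')
  have hsum : q ^ (k : ℕ) * (signVec N ᵥ* baseChange N q) k
      = (∑ n ∈ range N, (-q) ^ n * gaussBinom (q ^ 2) n k) * qPoch (-q) (q ^ 2) (k + 1) := by
    rw [← Fin.sum_univ_eq_sum_range fun n => (-q) ^ n * gaussBinom (q ^ 2) n k, sum_mul,
      Matrix.vecMul, dotProduct, mul_sum]
    refine sum_congr rfl fun n _ => ?_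
    rw [signVec, baseChange, Matrix.of_apply]
    obtain hnk | hkn := lt_or_ge (n : ℕ) k
    · simp [gaussBinom_eq_zero_of_lt, hnk]
    · rw [neg_pow q, ← pow_mul_pow_sub q hkn]
      ring
  apply mul_left_cancel₀ hq0
  rw [hsum, sum_pow_mul_gaussBinom_mul_qPoch (isPrimitiveRoot_sq hq hN) _ k.2,
    hN.neg_pow, hq.pow_eq_one, neg_pow, Pi.smul_apply, signVec, smul_eq_mul]
  ring

theorem lastWeight_dotProduct_fullStep_pow (hq : IsPrimitiveRoot q N) (hN : Odd N) (l : ℕ)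
    (v : Fin N → ℂ) :
    lastWeight N q ⬝ᵥ (fullStep N q ^ l *ᵥ v)
      = signVec N ⬝ᵥ (halfStep N q ^ (2 * l + 1) *ᵥ (negPochDiag N q *ᵥ v)) := by
  have hconj := (semiconjBy_negPochDiag N q).pow_right l
  rw [← pow_mul] at hconj
  rw [← signVec_vecMul_halfStep hq hN, ← Matrix.dotProduct_mulVec, Matrix.mulVec_mulVec,
    Matrix.mulVec_mulVec, mul_assoc, hconj.eq, ← mul_assoc, ← pow_succ']

theorem lastWeight_dotProduct_fullStep_pow_mulVec_one (hq : IsPrimitiveRoot q N) (hN : Odd N)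
    (l : ℕ) :
    lastWeight N q ⬝ᵥ (fullStep N q ^ (2 * l) *ᵥ 1)
      = 2 * (lastWeight N (q ^ 2) ⬝ᵥ (fullStep N (q ^ 2) ^ l *ᵥ firstWeight N q)) := by
  have hconj := (semiconjBy_baseChange N q).pow_right (2 * l + 1)
  rw [← pow_mul] at hconj
  calc lastWeight N q ⬝ᵥ (fullStep N q ^ (2 * l) *ᵥ 1)
      = signVec N ⬝ᵥ (halfStep N q ^ (2 * (2 * l + 1)) *ᵥ 1) := by
        rw [lastWeight_dotProduct_fullStep_pow hq hN, ← halfStep_mulVec_one, Matrix.mulVec_mulVec,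
          ← pow_succ, mul_add_one]
    _ = (signVec N ᵥ* baseChange N q) ⬝ᵥ (halfStep N (q ^ 2) ^ (2 * l + 1)
          *ᵥ (negPochDiag N (q ^ 2) *ᵥ firstWeight N q)) := by
        rw [← baseChange_mulVec_firstWeight hq.pow_eq_one hN, Matrix.mulVec_mulVec, ← hconj.eq,
          ← Matrix.mulVec_mulVec, Matrix.dotProduct_mulVec]
    _ = 2 * (lastWeight N (q ^ 2) ⬝ᵥ (fullStep N (q ^ 2) ^ l *ᵥ firstWeight N q)) := by
        rw [signVec_vecMul_baseChange hq hN, smul_dotProduct, smul_eq_mul,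
          lastWeight_dotProduct_fullStep_pow (isPrimitiveRoot_sq hq hN) hN]

theorem sum_Sterm_eq_dotProduct (hq : IsPrimitiveRoot q N) (hN : 0 < N) (l : ℕ) :
    ∑ n ∈ Fintype.piFinset (fun _ : Fin (l + 1) => range N), Sterm (l + 2) 0 q (pad (l + 1) n)
      = lastWeight N q ⬝ᵥ (fullStep N q ^ l *ᵥ 1) := by
  refine Eq.trans (sum_congr rfl fun n hn => ?_) (sum_piFinset_range_pad_eq_dotProduct N l
    (fun n => (-1) ^ n * q ^ (n + 1).choose 2) (fun n k => gaussBinom q n k * q ^ (k ^ 2 + k)) 1)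
  have hlt := pad_lt hN hn
  generalize pad (l + 1) n = u at hlt
  have hbinom : ∏ i ∈ range l, qBinom q (u (i + 1)) (u i)
      = ∏ i ∈ range l, gaussBinom q (u (i + 1)) (u i) :=
    prod_congr rfl fun i _ => qBinom_eq_gaussBinom hq (hlt _) _
  simp only [Sterm, Nat.add_sub_cancel, Nat.add_eq_zero_iff, one_ne_zero, and_false, if_false,
    add_zero, ← range_eq_Ico, hbinom, prod_mul_distrib, prod_pow_eq_pow_sum,
    Nat.choose_two_right, Pi.one_apply, pow_add, mul_comm (u l + 1)]
  ring

theorem sum_Gterm_eq_dotProduct (hq : IsPrimitiveRoot (q ^ 2) N) (hN : 0 < N) (l : ℕ) :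
    ∑ n ∈ Fintype.piFinset (fun _ : Fin (l + 1) => range N), Gterm (l + 2) q (pad (l + 1) n)
      = lastWeight N (q ^ 2) ⬝ᵥ (fullStep N (q ^ 2) ^ l *ᵥ firstWeight N q) := by
  refine Eq.trans (sum_congr rfl fun n hn => ?_) (sum_piFinset_range_pad_eq_dotProduct N l
    (fun n => (-1) ^ n * (q ^ 2) ^ (n + 1).choose 2)
    (fun n k => gaussBinom (q ^ 2) n k * (q ^ 2) ^ (k ^ 2 + k))
    (fun n => qPoch q (q ^ 2) n / qPoch (-q) q (2 * n + 1)))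
  have hlt := pad_lt hN hn
  generalize pad (l + 1) n = u at hlt
  have hbinom : ∏ i ∈ range l, qBinom (q ^ 2) (u (i + 1)) (u i)
      = ∏ i ∈ range l, gaussBinom (q ^ 2) (u (i + 1)) (u i) :=
    prod_congr rfl fun i _ => qBinom_eq_gaussBinom hq (hlt _) _
  have hlast : u l * (u l + 1) = u l ^ 2 + u l := by ring
  simp only [Gterm, Nat.add_sub_cancel, hbinom, prod_mul_distrib, prod_pow_eq_pow_sum, ← mul_add,
    ← mul_sum, ← pow_mul, two_mul_succ_choose_two, hlast]
  ring

end TransferMatrices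

theorem stmt19 (m : ℕ) (hm : 2 ≤ m) (N : ℕ) (hNodd : Odd N) (q : ℂ)
    (hqN : q ^ N = 1) (hprim : ∀ j : ℕ, 1 ≤ j → j < N → q ^ j ≠ 1) :
    (∑ n ∈ Fintype.piFinset (fun _ : Fin (2 * m - 3) => Finset.range N),
        Sterm (2 * m - 2) 0 q (pad (2 * m - 3) n)) =
      2 * ∑ n ∈ Fintype.piFinset (fun _ : Fin (m - 1) => Finset.range N),
        Gterm m q (pad (m - 1) n) := by
  have hq : IsPrimitiveRoot q N := .mk_of_lt q hNodd.pos hqN hprim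
  obtain ⟨l, rfl⟩ := Nat.exists_eq_add_of_le' hm
  rw [show 2 * (l + 2) - 3 = 2 * l + 1 by omega, show 2 * (l + 2) - 2 = 2 * l + 2 by omega,
    show l + 2 - 1 = l + 1 by omega, sum_Sterm_eq_dotProduct hq hNodd.pos,
    sum_Gterm_eq_dotProduct (isPrimitiveRoot_sq hq hNodd) hNodd.pos]
  exact lastWeight_dotProduct_fullStep_pow_mulVec_one hq hNodd l
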